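/- Let u be an information structure on K × (C×C₁) × D and v = marg_{K×C×D}u. If under u the signal c₁ is ε-conditionally independent from (k, d) given c, then sup_{g∈𝒢}(val(u,g) − val(v,g)) ≤ ε. -/

import Mathlib

open scoped BigOperators ENNReal

namespace ValueDistance

/-- An information structure: a probability distribution on `K × ℕ × ℕ`
(state, signal of player 1, signal of player 2). -/
abbrev InfoStruct (K : Type) := PMF (K × ℕ × ℕ)

/-- A behavior strategy / garbling : a map `ℕ → Δ(ℕ)`. -/
abbrev Garbling : Type := ℕ → PMF ℕ

variable {K : Type}

/-- `g` is a payoff function with action bound `L` : values in `[-1,1]`,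
`g k i j = -1` when `i ≥ L`, and `g k i j = 1` when `i < L` and `j ≥ L`. -/
def IsPayoffL (L : ℕ) (g : K → ℕ → ℕ → ℝ) : Prop :=
  (∀ k i j, g k i j ∈ Set.Icc (-1 : ℝ) 1) ∧
  (∀ k i j, L ≤ i → g k i j = -1) ∧
  (∀ k i j, i < L → L ≤ j → g k i j = 1)

/-- `g` belongs to the set `𝒢` of payoff functions. -/
def IsPayoff (g : K → ℕ → ℕ → ℝ) : Prop := ∃ L, IsPayoffL L g

/-- `g` belongs to the set `𝒢₁` of single-agent (player 1) problems. -/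
def IsPayoff1 (g : K → ℕ → ℕ → ℝ) : Prop :=
  IsPayoff g ∧ ∀ k i j j', g k i j = g k i j'

/-- Expected payoff in the Bayesian game `Γ(u,g)` when player 1 uses the behavior
strategy `σ` and player 2 uses `τ`. -/
noncomputable def payoff (u : InfoStruct K) (g : K → ℕ → ℕ → ℝ)
    (σ τ : Garbling) : ℝ :=
  ∑' (x : K × ℕ × ℕ) (i : ℕ) (j : ℕ),
    (u x).toReal * (σ x.2.1 i).toReal * (τ x.2.2 j).toReal * g x.1 i j

/-- The value `val(u,g)` of the zero-sum Bayesian game `Γ(u,g)`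
(the common value of `sup inf` and `inf sup` of the expected payoff;
we take `sup inf` as the definition). -/
noncomputable def val (u : InfoStruct K) (g : K → ℕ → ℕ → ℝ) : ℝ :=
  ⨆ σ : Garbling, ⨅ τ : Garbling, payoff u g σ τ

/-- Total variation distance `‖u − v‖`. -/
noncomputable def tv {α : Type} (u v : PMF α) : ℝ :=
  ∑' x : α, |(u x).toReal - (v x).toReal|

/-- `q.u` : player 1's signal garbled through `q`. -/
noncomputable def garbleLeft (q : Garbling) (u : InfoStruct K) : InfoStruct K :=
  u.bind (fun x => (q x.2.1).map (fun c => (x.1, c, x.2.2)))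

/-- `u.q` : player 2's signal garbled through `q`. -/
noncomputable def garbleRight (u : InfoStruct K) (q : Garbling) : InfoStruct K :=
  u.bind (fun x => (q x.2.2).map (fun d => (x.1, x.2.1, d)))

/-- The value-based distance `d(u,v) = sup_{g ∈ 𝒢} |val(u,g) − val(v,g)|`. -/
noncomputable def dVal (u v : InfoStruct K) : ℝ :=
  ⨆ g : {g : K → ℕ → ℕ → ℝ // IsPayoff g}, |val u g.1 - val v g.1|

/-- The single-agent distance `d₁(u,v) = sup_{g ∈ 𝒢₁} |val(u,g) − val(v,g)|`. -/
noncomputable def d1 (u v : InfoStruct K) : ℝ :=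
  ⨆ g : {g : K → ℕ → ℕ → ℝ // IsPayoff1 g}, |val u g.1 - val v g.1|

/-- Marginal of an information structure on `K × ℕ` (state, player 1's signal). -/
noncomputable def marg1 (u : InfoStruct K) : PMF (K × ℕ) :=
  u.map (fun x => (x.1, x.2.1))

/-- Garbling of a single-agent information structure:
`(q.w)(k,c) = Σ_s w(k,s)·q(s)({c})`. -/
noncomputable def garble1 (q : Garbling) (w : PMF (K × ℕ)) : PMF (K × ℕ) :=
  w.bind (fun x => (q x.2).map (fun c => (x.1, c)))

/-- Marginal of an information structure on the states. -/
noncomputable def margK (u : InfoStruct K) : PMF K := u.map Prod.fst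

/-- Marginal of an information structure on `K × ℕ` (state, player 2's signal). -/
noncomputable def margKD (u : InfoStruct K) : PMF (K × ℕ) :=
  u.map (fun x => (x.1, x.2.2))

/-- `σ.q` : on signal `c`, draw `c'` according to `q(c)` and play `σ(c')`. -/
noncomputable def compGarble (σ q : Garbling) : Garbling :=
  fun c => (q c).bind σ

/-- `u ∈ 𝒰(L)` : both players' signals are `< L` with probability 1. -/
def InU (L : ℕ) (u : InfoStruct K) : Prop :=
  ∀ x : K × ℕ × ℕ, u x ≠ 0 → x.2.1 < L ∧ x.2.2 < L

/-- `q ∈ 𝒬(L)` : garbling with values supported on `{0,…,L−1}`. -/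
def GarblingIn (L : ℕ) (q : Garbling) : Prop :=
  ∀ n m, q n m ≠ 0 → m < L

/-- The two players' signals are conditionally independent given the state:
`u(k)·u(k,c,d) = u(k,c)·u(k,d)` for all `k, c, d`
(equivalently `u(c,d|k) = u(c|k)·u(d|k)` whenever `u(k) > 0`). -/
def CondIndep (u : InfoStruct K) : Prop :=
  ∀ (k : K) (c d : ℕ),
    (∑' y : ℕ × ℕ, u (k, y)) * u (k, c, d)
      = (∑' d' : ℕ, u (k, c, d')) * (∑' c' : ℕ, u (k, c', d))

end ValueDistance

namespace ValueDistance

theorem summable_pmf_mul {α : Type} (p : PMF α) (f : α → ℝ) (hf : ∀ a, |f a| ≤ 1) :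
    Summable (fun a => (p a).toReal * f a) := by
  have hs : Summable (fun a => (p a).toReal) :=
    ENNReal.summable_toReal p.tsum_coe_ne_top
  refine Summable.of_norm_bounded hs (fun a => ?_)
  rw [Real.norm_eq_abs, abs_mul, abs_of_nonneg ENNReal.toReal_nonneg]
  exact mul_le_of_le_one_right ENNReal.toReal_nonneg (hf a)

theorem tsum_pmf_toReal {α : Type} (p : PMF α) : ∑' a, (p a).toReal = 1 := by
  rw [← ENNReal.tsum_toReal_eq (fun a => p.apply_ne_top a), p.tsum_coe]; simp

theorem abs_tsum_pmf_le {α : Type} (p : PMF α) (f : α → ℝ) (hf : ∀ a, |f a| ≤ 1) :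
    |∑' a, (p a).toReal * f a| ≤ 1 := by
  have hs : Summable (fun a => (p a).toReal) :=
    ENNReal.summable_toReal p.tsum_coe_ne_top
  have h := tsum_of_norm_bounded (f := fun a => (p a).toReal * f a) hs.hasSum (fun a => by
    rw [Real.norm_eq_abs, abs_mul, abs_of_nonneg ENNReal.toReal_nonneg]
    exact mul_le_of_le_one_right ENNReal.toReal_nonneg (hf a))
  rwa [tsum_pmf_toReal, Real.norm_eq_abs] at h

theorem tsum_bind {α β : Type} (p : PMF α) (q : α → PMF β) (f : β → ℝ) (hf : ∀ a, |f a| ≤ 1) :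
    ∑' b, ((p.bind q) b).toReal * f b = ∑' a, (p a).toReal * ∑' b, (q a b).toReal * f b := by
  have hs0 : Summable (fun x : β × α => (p x.2 * q x.2 x.1).toReal) := by
    apply ENNReal.summable_toReal
    rw [ENNReal.tsum_prod', ENNReal.tsum_comm]
    simp [ENNReal.tsum_mul_left, PMF.tsum_coe]
  have hs : Summable (fun x : β × α => (p x.2).toReal * ((q x.2 x.1).toReal * f x.1)) := by
    refine Summable.of_norm_bounded hs0 (fun a => ?_)
    rw [← mul_assoc, ← ENNReal.toReal_mul, Real.norm_eq_abs, abs_mul,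
      abs_of_nonneg ENNReal.toReal_nonneg]
    exact mul_le_of_le_one_right ENNReal.toReal_nonneg (hf _)
  have e1 : ∀ b, ((p.bind q) b).toReal * f b
      = ∑' a, (p a).toReal * ((q a b).toReal * f b) := by
    intro b
    rw [PMF.bind_apply, ENNReal.tsum_toReal_eq
      (fun a => ENNReal.mul_ne_top (p.apply_ne_top a) ((q a).apply_ne_top b)), ← tsum_mul_right]
    refine tsum_congr (fun a => ?_)
    rw [ENNReal.toReal_mul, mul_assoc]
  rw [tsum_congr e1]
  simp_rw [← tsum_mul_left]
  exact (Summable.tsum_comm (f := fun b a => (p a).toReal * ((q a b).toReal * f b)) hs).symm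

theorem tsum_map {α β : Type} (p : PMF α) (φ : α → β) (f : β → ℝ) (hf : ∀ a, |f a| ≤ 1) :
    ∑' b, ((p.map φ) b).toReal * f b = ∑' a, (p a).toReal * f (φ a) := by
  rw [← PMF.bind_pure_comp, tsum_bind _ _ _ hf]
  refine tsum_congr (fun a => ?_)
  congr 1
  rw [tsum_eq_single (φ a)]
  · simp
  · intro b hb
    simp [hb]

noncomputable def gpay (g : K → ℕ → ℕ → ℝ) (k : K) (p q : PMF ℕ) : ℝ :=
  ∑' i, (p i).toReal * ∑' j, (q j).toReal * g k i j

theorem abs_inner {g : K → ℕ → ℕ → ℝ} (hg : ∀ k i j, |g k i j| ≤ 1) (k : K) (q : PMF ℕ) (i : ℕ) :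
    |∑' j, (q j).toReal * g k i j| ≤ 1 := abs_tsum_pmf_le _ _ (hg k i)

theorem abs_gpay {g : K → ℕ → ℕ → ℝ} (hg : ∀ k i j, |g k i j| ≤ 1) (k : K) (p q : PMF ℕ) :
    |gpay g k p q| ≤ 1 := abs_tsum_pmf_le _ _ (abs_inner hg k q)

theorem payoff_eq (u : InfoStruct K) (g : K → ℕ → ℕ → ℝ) (σ τ : Garbling) :
    payoff u g σ τ = ∑' x, (u x).toReal * gpay g x.1 (σ x.2.1) (τ x.2.2) := by
  unfold payoff gpay
  simp_rw [← tsum_mul_left]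
  refine tsum_congr fun x => tsum_congr fun i => tsum_congr fun j => ?_
  ring

theorem abs_payoff {g : K → ℕ → ℕ → ℝ} (hg : ∀ k i j, |g k i j| ≤ 1) (u : InfoStruct K)
    (σ τ : Garbling) : |payoff u g σ τ| ≤ 1 := by
  rw [payoff_eq]
  exact abs_tsum_pmf_le _ _ (fun _ => abs_gpay hg _ _ _)

/-- mass of `(c, c₁)` -/
noncomputable def mass (w : PMF (K × (ℕ × ℕ) × ℕ)) (c c₁ : ℕ) : ℝ≥0∞ :=
  ∑' (k' : K) (d' : ℕ), w (k', (c, c₁), d')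

theorem tsum_mass (w : PMF (K × (ℕ × ℕ) × ℕ)) (c : ℕ) :
    ∑' c₁, mass w c c₁ = ∑' (k' : K) (c₁' : ℕ) (d' : ℕ), w (k', (c, c₁'), d') := by
  unfold mass
  exact ENNReal.tsum_comm

theorem tsum_mass_ne_top (w : PMF (K × (ℕ × ℕ) × ℕ)) (c : ℕ) : ∑' c₁, mass w c c₁ ≠ ⊤ := by
  rw [tsum_mass]
  have h1 : (∑' (k' : K) (c₁' : ℕ) (d' : ℕ), w (k', (c, c₁'), d'))
      = ∑' z : K × ℕ × ℕ, w (z.1, (c, z.2.1), z.2.2) := by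
    rw [ENNReal.tsum_prod']
    refine tsum_congr fun k => ?_
    rw [ENNReal.tsum_prod']
  rw [h1]
  have hinj : Function.Injective
      (fun z : K × ℕ × ℕ => ((z.1, (c, z.2.1), z.2.2) : K × (ℕ × ℕ) × ℕ)) := by
    rintro ⟨a, b, d⟩ ⟨a', b', d'⟩ h
    simpa using h
  have := ENNReal.tsum_comp_le_tsum_of_injective hinj w
  rw [w.tsum_coe] at this
  exact ne_top_of_le_ne_top ENNReal.one_ne_top this

open Classical in
noncomputable def condl (w : PMF (K × (ℕ × ℕ) × ℕ)) (c : ℕ) : PMF ℕ :=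
  if h : ∑' c₁, mass w c c₁ = 0 then PMF.pure 0
  else PMF.normalize (mass w c) h (tsum_mass_ne_top w c)

noncomputable def vmarg (w : PMF (K × (ℕ × ℕ) × ℕ)) : InfoStruct K :=
  w.map (fun x => (x.1, x.2.1.1, x.2.2))

noncomputable def wind (w : PMF (K × (ℕ × ℕ) × ℕ)) : PMF (K × (ℕ × ℕ) × ℕ) :=
  (vmarg w).bind (fun x => (condl w x.2.1).map (fun c₁ => (x.1, (x.2.1, c₁), x.2.2)))

theorem vmarg_apply (w : PMF (K × (ℕ × ℕ) × ℕ)) (k : K) (c d : ℕ) :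
    vmarg w (k, c, d) = ∑' c₁' : ℕ, w (k, (c, c₁'), d) := by
  classical
  have hinj : Function.Injective (fun c₁ : ℕ => ((k, (c, c₁), d) : K × (ℕ × ℕ) × ℕ)) := by
    intro a b h
    simpa using h
  unfold vmarg
  rw [PMF.map_apply, ← hinj.tsum_eq]
  · simp
  · rintro ⟨k', ⟨c', c₁'⟩, d'⟩ h
    simp at h
    refine ⟨c₁', ?_⟩
    simp [h]

theorem wind_apply (w : PMF (K × (ℕ × ℕ) × ℕ)) (k : K) (c c₁ d : ℕ) :
    wind w (k, (c, c₁), d) = vmarg w (k, c, d) * condl w c c₁ := by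
  classical
  unfold wind
  rw [PMF.bind_apply, tsum_eq_single (k, c, d)]
  · congr 1
    rw [PMF.map_apply, tsum_eq_single c₁]
    · simp
    · intro b hb
      simp [Ne.symm hb]
  · rintro ⟨k', c', d'⟩ h
    rw [PMF.map_apply]
    have : ∀ a, ¬ ((k, (c, c₁), d) = ((k', (c', a), d') : K × (ℕ × ℕ) × ℕ)) := by
      intro a ha
      apply h
      simp at ha
      simp [ha]
    simp only [this, if_false, tsum_zero, mul_zero]

theorem wind_toReal (w : PMF (K × (ℕ × ℕ) × ℕ)) (k : K) (c c₁ d : ℕ) :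
    (wind w (k, (c, c₁), d)).toReal =
      (∑' (k' : K) (d' : ℕ), w (k', (c, c₁), d')).toReal
            * (∑' c₁' : ℕ, w (k, (c, c₁'), d)).toReal
            / (∑' (k' : K) (c₁' : ℕ) (d' : ℕ), w (k', (c, c₁'), d')).toReal := by
  rw [wind_apply, vmarg_apply, ← tsum_mass]
  by_cases h : ∑' c₁, mass w c c₁ = 0
  · have h2 : ∑' c₁' : ℕ, w (k, (c, c₁'), d) = 0 := by
      rw [ENNReal.tsum_eq_zero] at h ⊢
      intro i
      have := h i
      unfold mass at this
      rw [ENNReal.tsum_eq_zero] at this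
      exact ENNReal.tsum_eq_zero.1 (this k) d
    rw [h, h2]; simp
  · rw [condl, dif_neg h, PMF.normalize_apply]
    rw [ENNReal.toReal_mul, ENNReal.toReal_mul, ENNReal.toReal_inv]
    change _ = (mass w c c₁).toReal * _ / _
    rw [div_eq_mul_inv]; ring

noncomputable def avgStrat (w : PMF (K × (ℕ × ℕ) × ℕ)) (σ : Garbling) : Garbling :=
  fun c => (condl w c).bind (fun c₁ => σ (Nat.pair c c₁))

theorem payoff_avg {g : K → ℕ → ℕ → ℝ} (hg : ∀ k i j, |g k i j| ≤ 1)
    (w : PMF (K × (ℕ × ℕ) × ℕ)) (σ τ : Garbling) :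
    payoff (vmarg w) g (avgStrat w σ) τ =
      ∑' y, (wind w y).toReal * gpay g y.1 (σ (Nat.pair y.2.1.1 y.2.1.2)) (τ y.2.2) := by
  rw [payoff_eq, wind, tsum_bind _ _ _ (fun _ => abs_gpay hg _ _ _)]
  refine tsum_congr fun x => ?_
  congr 1
  rw [tsum_map _ _ _ (fun _ => abs_gpay hg _ _ _)]
  unfold gpay avgStrat
  rw [tsum_bind _ _ _ (abs_inner hg _ _)]

theorem payoff_pair {g : K → ℕ → ℕ → ℝ} (hg : ∀ k i j, |g k i j| ≤ 1)
    (w : PMF (K × (ℕ × ℕ) × ℕ)) (σ τ : Garbling) :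
    payoff (w.map (fun x => (x.1, Nat.pair x.2.1.1 x.2.1.2, x.2.2))) g σ τ =
      ∑' y, (w y).toReal * gpay g y.1 (σ (Nat.pair y.2.1.1 y.2.1.2)) (τ y.2.2) := by
  rw [payoff_eq, tsum_map _ _ _ (fun _ => abs_gpay hg _ _ _)]

theorem summable_diff {α : Type} (p q : PMF α) :
    Summable (fun y => |(p y).toReal - (q y).toReal|) :=
  ((ENNReal.summable_toReal p.tsum_coe_ne_top).sub
    (ENNReal.summable_toReal q.tsum_coe_ne_top)).abs

theorem payoff_diff {g : K → ℕ → ℕ → ℝ} (hg : ∀ k i j, |g k i j| ≤ 1)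
    (w : PMF (K × (ℕ × ℕ) × ℕ)) (σ τ : Garbling) :
    payoff (w.map (fun x => (x.1, Nat.pair x.2.1.1 x.2.1.2, x.2.2))) g σ τ
      ≤ payoff (vmarg w) g (avgStrat w σ) τ + tv w (wind w) := by
  rw [payoff_avg hg, payoff_pair hg, ← sub_le_iff_le_add',
    ← (summable_pmf_mul w _ (fun _ => abs_gpay hg _ _ _)).tsum_sub
      (summable_pmf_mul (wind w) _ (fun _ => abs_gpay hg _ _ _))]
  refine Summable.tsum_le_tsum (fun y => ?_)
    ((summable_pmf_mul w _ (fun _ => abs_gpay hg _ _ _)).sub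
      (summable_pmf_mul (wind w) _ (fun _ => abs_gpay hg _ _ _))) (summable_diff _ _)
  rw [← sub_mul]
  refine (le_abs_self _).trans ?_
  rw [abs_mul]
  exact mul_le_of_le_one_right (abs_nonneg _) (abs_gpay hg _ _ _)

theorem tv_eq (w : PMF (K × (ℕ × ℕ) × ℕ)) :
    tv w (wind w) = ∑' (c : ℕ) (k : K) (d : ℕ) (c₁ : ℕ),
        |(w (k, (c, c₁), d)).toReal - (wind w (k, (c, c₁), d)).toReal| := by
  let e : (ℕ × K × ℕ × ℕ) ≃ (K × (ℕ × ℕ) × ℕ) :=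
    { toFun := fun z => (z.2.1, (z.1, z.2.2.2), z.2.2.1)
      invFun := fun y => (y.2.1.1, y.1, y.2.2, y.2.1.2)
      left_inv := fun _ => rfl
      right_inv := fun _ => rfl }
  have hs := summable_diff w (wind w)
  have hs' := e.summable_iff.2 hs
  unfold tv
  rw [← e.tsum_eq]
  refine (Summable.tsum_prod hs').trans (tsum_congr fun c => ?_)
  have h1 := hs'.prod_factor c
  refine (Summable.tsum_prod h1).trans (tsum_congr fun k => ?_)
  have h2 := h1.prod_factor k
  exact (Summable.tsum_prod h2)

/-- If under `w ∈ Δ(K × (C×C₁) × D)` the signal `c₁` is `ε`-conditionally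
independent from `(k,d)` given `c`, then
`sup_{g∈𝒢}(val(u,g) − val(v,g)) ≤ ε`, where `u` keeps `(c,c₁)` (encoded in
`ℕ` via `Nat.pair`) and `v = marg_{K×C×D} u`. -/
theorem additional_signal_eps_indep (K : Type) [Fintype K]
    (hK : 2 ≤ Fintype.card K) (ε : ℝ) (w : PMF (K × (ℕ × ℕ) × ℕ))
    (hc₁ : (∑' (c : ℕ) (k : K) (d : ℕ) (c₁ : ℕ),
        |(w (k, (c, c₁), d)).toReal
          - (∑' (k' : K) (d' : ℕ), w (k', (c, c₁), d')).toReal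
            * (∑' c₁' : ℕ, w (k, (c, c₁'), d)).toReal
            / (∑' (k' : K) (c₁' : ℕ) (d' : ℕ), w (k', (c, c₁'), d')).toReal|) ≤ ε) :
    (⨆ g : {g : K → ℕ → ℕ → ℝ // IsPayoff g},
        (val (w.map (fun x => (x.1, Nat.pair x.2.1.1 x.2.1.2, x.2.2))) g.1
          - val (w.map (fun x => (x.1, x.2.1.1, x.2.2))) g.1)) ≤ ε := by
  have htv : tv w (wind w) ≤ ε := by
    rw [tv_eq]
    simp_rw [wind_toReal]
    exact hc₁
  have hε : 0 ≤ ε := (tsum_nonneg fun _ => abs_nonneg _).trans htv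
  refine Real.iSup_le (fun g => ?_) hε
  obtain ⟨g, L, hL, -⟩ := g
  have hg : ∀ k i j, |g k i j| ≤ 1 := fun k i j => abs_le.2 (hL k i j)
  have hbb : ∀ (u : InfoStruct K) (σ : Garbling),
      BddBelow (Set.range fun τ => payoff u g σ τ) := by
    intro u σ
    refine ⟨-1, ?_⟩
    rintro _ ⟨τ, rfl⟩
    exact (abs_le.1 (abs_payoff hg u σ τ)).1
  have hba : ∀ (u : InfoStruct K),
      BddAbove (Set.range fun σ : Garbling => ⨅ τ : Garbling, payoff u g σ τ) := by
    intro u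
    refine ⟨1, ?_⟩
    rintro _ ⟨σ, rfl⟩
    exact (ciInf_le (hbb u σ) (fun _ => PMF.pure 0)).trans (abs_le.1 (abs_payoff hg u σ _)).2
  haveI : Nonempty Garbling := ⟨fun _ => PMF.pure 0⟩
  change _ - val (vmarg w) g ≤ ε
  rw [sub_le_iff_le_add]
  refine ciSup_le fun σ => ?_
  rw [← sub_le_iff_le_add']
  refine le_trans ?_ (le_ciSup (hba (vmarg w)) (avgStrat w σ))
  refine le_ciInf fun τ => ?_
  have h1 := ciInf_le (hbb (w.map (fun x => (x.1, Nat.pair x.2.1.1 x.2.1.2, x.2.2))) σ) τ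
  have h2 := payoff_diff hg w σ τ
  simp only at h1 ⊢
  linarith


end ValueDistance
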